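/- arXiv:1202.2188 — 6 statements merged into one kernel-verified Lean document; each statement's English description precedes it below -/
import Mathlib

section
/- Let G be a group generated by a finite subset, let A be a commutative ring, let M be an A-module equipped with an action of G by A-linear automorphisms, and let B be a commutative A-algebra that is flat as an A-module. Let G act on M ⊗_A B through the first factor (g acts as g ⊗ id). Then the canonical A-linear map M^G ⊗_A B → (M ⊗_A B)^G is bijective, where N^G denotes the submodule of G-invariant elements of an A-module N with G-action. -/
/-!
Invariance under `G` is invariance under the generators, so `M^G` is the kernel of the single
map `M → ⊕ M` with components `ρ g - 1`, `g ∈ SG`. Flatness of `B` preserves the exact sequence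
`0 → M^G → M → ⊕ M`, and since `SG` is finite the tensor product commutes with the product
on the right, so the new kernel is again described by invariance under the generators.
-/

open TensorProduct

/-- The stabilizer of a vector is a subgroup, so invariance can be tested on generators. -/
theorem mem_invariants_iff_of_closure {A G N : Type*} [CommRing A] [Group G]
    [AddCommGroup N] [Module A N] (ρ : Representation A G N) {S : Set G}
    (hS : Subgroup.closure S = ⊤) (x : N) :
    x ∈ ρ.invariants ↔ ∀ g ∈ S, ρ g x = x := by
  rw [Representation.mem_invariants]
  refine ⟨fun h g _ => h g, fun h g => ?_⟩
  have hg : g ∈ Subgroup.closure S := hS ▸ Subgroup.mem_top g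
  induction hg using Subgroup.closure_induction with
  | mem g hg => exact h g hg
  | one => simp
  | mul a b _ _ ha hb => rw [map_mul, Module.End.mul_apply, hb, ha]
  | inv a _ ha =>
    conv_lhs => rw [← ha]
    exact ρ.inv_self_apply a x

/-- Lemma `flat-invariant`: let `G` be a group generated by a finite subset,
`A` a commutative ring, `M` an `A`-module with a `G`-action by `A`-linear automorphisms
(a representation `ρ`), and `B` a flat commutative `A`-algebra.  Let `G` act on `M ⊗_A B`
through the first factor (a representation `ρ'` with `ρ' g (m ⊗ b) = ρ g m ⊗ b`).  Then the
canonical `A`-linear map `M^G ⊗_A B → (M ⊗_A B)^G` is bijective; equivalently, the canonical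
map `M^G ⊗_A B → M ⊗_A B` is injective and its range is exactly `(M ⊗_A B)^G`. -/
theorem flat_invariant (A : Type*) [CommRing A] (G : Type*) [Group G]
    (SG : Finset G) (hSG : Subgroup.closure (SG : Set G) = ⊤)
    (M : Type*) [AddCommGroup M] [Module A M] (ρ : Representation A G M)
    (B : Type*) [CommRing B] [Algebra A B] [Module.Flat A B]
    (ρ' : Representation A G (M ⊗[A] B))
    (hρ' : ∀ (g : G) (x : M) (b : B), ρ' g (x ⊗ₜ[A] b) = (ρ g x) ⊗ₜ[A] b) :
    Function.Injective
      (TensorProduct.map ρ.invariants.subtype (LinearMap.id : B →ₗ[A] B)) ∧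
    LinearMap.range
      (TensorProduct.map ρ.invariants.subtype (LinearMap.id : B →ₗ[A] B)) =
      ρ'.invariants := by
  classical
  let f : M →ₗ[A] (SG → M) := LinearMap.pi fun g => ρ g - LinearMap.id
  have hρ'_eq (g : G) : ρ' g = (ρ g).rTensor B := TensorProduct.ext' (hρ' g)
  have hf : Function.Exact ρ.invariants.subtype f := by
    intro x
    rw [Submodule.coe_subtype, Subtype.range_coe, SetLike.mem_coe,
      mem_invariants_iff_of_closure ρ hSG]
    simp [f, funext_iff, sub_eq_zero]
  have hfB : Function.Exact (ρ.invariants.subtype.rTensor B) (f.rTensor B) :=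
    Module.Flat.rTensor_exact B hf
  refine ⟨Module.Flat.rTensor_preserves_injective_linearMap _
    ρ.invariants.injective_subtype, ?_⟩
  -- `(⊕ M) ⊗ B ≃ ⊕ (M ⊗ B)` turns `f ⊗ B` into the family of the `ρ' g - 1`.
  have hcomp (x : M ⊗[A] B) (g : SG) :
      TensorProduct.piLeft A B (fun _ : SG => M) (f.rTensor B x) g = ρ' g x - x := by
    rw [hρ'_eq]
    induction x with
    | zero => simp
    | tmul m b => simp [f, TensorProduct.sub_tmul]
    | add x y hx hy => simp only [map_add, Pi.add_apply, hx, hy]; abel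
  ext x
  rw [mem_invariants_iff_of_closure ρ' hSG]
  refine (hfB x).symm.trans ?_
  rw [← (TensorProduct.piLeft A B (fun _ : SG => M)).map_eq_zero_iff, funext_iff]
  simp only [hcomp, Pi.zero_apply, sub_eq_zero, Subtype.forall, SetLike.mem_coe]
end

section
/- Let p be a prime, let S be a complete commutative normed ring, let φ : S → S be an isometric ring homomorphism, and let α be a unit of S with φ(α) = α and ‖α⁻¹‖ < 1. Let a, b : ℚ → S and suppose there exist r > 0 and D ≥ 0 such that ‖a(i)‖ ≤ D·p^{r·i} and ‖b(i)‖ ≤ D·p^{r·i} for all i ∈ ℚ. If φ(b(i/p)) − α·b(i) = a(i) for all i ∈ ℚ, then for every i ∈ ℚ the series ∑_{m=0}^∞ α^{−(m+1)}·φ^m(a(i·p^{−m})) converges in S and b(i) = −∑_{m=0}^∞ α^{−(m+1)}·φ^m(a(i·p^{−m})). In particular, b is uniquely determined by a, α and φ. -/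
/-!
Put `F m = α⁻ᵐ φᵐ(b(i p⁻ᵐ))`. Applying `α⁻⁽ᵐ⁺¹⁾ φᵐ` to the equation at `i p⁻ᵐ` and using `φ α = α`
shows that the `m`-th term of the series is `F (m + 1) - F m`, so the partial sums telescope to
`F n - b i`. Since `i p⁻ᵐ ≤ |i|`, the growth bounds on `a` and `b` are uniform along the orbit
`i p⁻ᵐ`; as `φ` is isometric and `‖α⁻¹‖ < 1`, the terms are dominated by a geometric series and
`F n → 0`.
-/

/-- A growth bound `D * p ^ (r * i)` is uniform along the sequence `i / p ^ m`. -/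
lemma norm_le_of_growth {S : Type*} [NormedCommRing S] {p : ℕ} (hp : p.Prime) {c : ℚ → S}
    {r D : ℝ} (hr : 0 < r) (hD : 0 ≤ D)
    (hc : ∀ i : ℚ, ‖c i‖ ≤ D * (p : ℝ) ^ (r * (i : ℝ))) (i : ℚ) (m : ℕ) :
    ‖c (i / (p : ℚ) ^ m)‖ ≤ D * (p : ℝ) ^ (r * |(i : ℝ)|) := by
  have hp1 : (1 : ℝ) ≤ p := by exact_mod_cast hp.one_le
  have hpm : (1 : ℝ) ≤ (p : ℝ) ^ m := one_le_pow₀ hp1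
  have hle : ((i / (p : ℚ) ^ m : ℚ) : ℝ) ≤ |(i : ℝ)| := by
    push_cast
    calc (i : ℝ) / (p : ℝ) ^ m ≤ |(i : ℝ)| / (p : ℝ) ^ m := by
          gcongr
          exact le_abs_self _
      _ ≤ |(i : ℝ)| := div_le_self (abs_nonneg _) hpm
  refine (hc _).trans ?_
  gcongr

lemma norm_iterate_eq {S : Type*} [NormedCommRing S] {φ : S →+* S} (hφ : ∀ x : S, ‖φ x‖ = ‖x‖)
    (m : ℕ) (x : S) : ‖(⇑φ)^[m] x‖ = ‖x‖ := by
  induction m with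
  | zero => rfl
  | succ m ih => rw [Function.iterate_succ_apply', hφ, ih]

/-- The exponent of `u` is kept positive because `‖1‖ ≤ 1` may fail in `S`. -/
lemma norm_pow_mul_iterate_le {S : Type*} [NormedCommRing S] {φ : S →+* S}
    (hφ : ∀ x : S, ‖φ x‖ = ‖x‖) (u x : S) {C : ℝ} (hx : ‖x‖ ≤ C) (m k : ℕ) :
    ‖u ^ (m + 1) * (⇑φ)^[k] x‖ ≤ ‖u‖ ^ (m + 1) * C := by
  refine (norm_mul_le _ _).trans ?_
  rw [norm_iterate_eq hφ]
  gcongr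
  exact norm_pow_le' u m.succ_pos


/-- uniqueness part of the key lemma on the Frobenius equation: let `p` be a
prime, `S` a complete commutative normed ring, `φ : S → S` an isometric ring homomorphism, and
`α ∈ Sˣ` with `φ α = α` and `‖α⁻¹‖ < 1`.  Let `a b : ℚ → S` be such that, for some `r > 0` and
`D ≥ 0`, `‖a i‖ ≤ D * p^(r*i)` and `‖b i‖ ≤ D * p^(r*i)` for all `i ∈ ℚ`.  If
`φ (b (i/p)) - α * b i = a i` for all `i ∈ ℚ`, then for every `i ∈ ℚ` the series
`∑_{m=0}^∞ α^{-(m+1)} φ^m (a (i p^{-m}))` converges in `S` with sum `-(b i)`; in particular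
`b` is uniquely determined by `a`, `α` and `φ`. -/
theorem frobenius_equation_uniqueness (p : ℕ) (hp : p.Prime)
    (S : Type*) [NormedCommRing S] [CompleteSpace S]
    (φ : S →+* S) (hφ : ∀ x : S, ‖φ x‖ = ‖x‖)
    (α : Sˣ) (hα : φ (α : S) = (α : S)) (hα1 : ‖((α⁻¹ : Sˣ) : S)‖ < 1)
    (a b : ℚ → S)
    (r : ℝ) (hr : 0 < r) (D : ℝ) (hD : 0 ≤ D)
    (ha : ∀ i : ℚ, ‖a i‖ ≤ D * (p : ℝ) ^ (r * (i : ℝ)))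
    (hb : ∀ i : ℚ, ‖b i‖ ≤ D * (p : ℝ) ^ (r * (i : ℝ)))
    (heq : ∀ i : ℚ, φ (b (i / (p : ℚ))) - (α : S) * b i = a i) :
    ∀ i : ℚ,
      HasSum (fun m : ℕ => ((α⁻¹ ^ (m + 1) : Sˣ) : S) * (⇑φ)^[m] (a (i / (p : ℚ) ^ m)))
        (-(b i)) := by
  intro i
  set u : S := ((α⁻¹ : Sˣ) : S) with hu
  set C : ℝ := D * (p : ℝ) ^ (r * |(i : ℝ)|)
  have hgeom : Summable fun m : ℕ => ‖u‖ ^ (m + 1) * C :=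
    ((summable_nat_add_iff 1).2 (summable_geometric_of_lt_one (norm_nonneg u) hα1)).mul_right C
  have hiter : ∀ m : ℕ, (⇑φ)^[m] (α : S) = α := fun m => Function.iterate_fixed hα m
  let F : ℕ → S := fun m => u ^ m * (⇑φ)^[m] (b (i / (p : ℚ) ^ m))
  have hterm : ∀ m : ℕ, ((α⁻¹ ^ (m + 1) : Sˣ) : S) * (⇑φ)^[m] (a (i / (p : ℚ) ^ m))
      = F (m + 1) - F m := by
    intro m
    have huα : u * (α : S) = 1 := α.inv_mul
    rw [← heq, div_div, ← pow_succ, iterate_map_sub, iterate_map_mul, hiter,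
      ← Function.iterate_succ_apply, Units.val_pow_eq_pow_val]
    change u ^ (m + 1) * _ = u ^ (m + 1) * _ - u ^ m * _
    linear_combination (-u ^ m * (⇑φ)^[m] (b (i / (p : ℚ) ^ m))) * huα
  have hsum : Summable fun m : ℕ =>
      ((α⁻¹ ^ (m + 1) : Sˣ) : S) * (⇑φ)^[m] (a (i / (p : ℚ) ^ m)) := by
    refine Summable.of_norm_bounded hgeom fun m => ?_
    rw [Units.val_pow_eq_pow_val]
    exact norm_pow_mul_iterate_le hφ u _ (norm_le_of_growth hp hr hD ha i m) m m
  have hF : Filter.Tendsto F Filter.atTop (nhds 0) := by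
    rw [← Filter.tendsto_add_atTop_iff_nat 1]
    exact squeeze_zero_norm (fun m => norm_pow_mul_iterate_le hφ u _
      (norm_le_of_growth hp hr hD hb i (m + 1)) m (m + 1)) hgeom.tendsto_atTop_zero
  rw [hsum.hasSum_iff_tendsto_nat]
  simp only [hterm, Finset.sum_range_sub]
  simpa [F] using hF.sub_const (F 0)
end

section
/- Let p be a prime, let S be a complete commutative normed ring, let φ : S → S be an isometric ring automorphism, and let α be a unit of S with φ(α) = α and ‖α⁻¹‖ < 1. Let a, b : ℚ → S, and suppose there exist r > 0 and D ≥ 0 such that ‖a(i)‖ ≤ D·p^{r·i} and ‖b(i)‖ ≤ D·p^{r·i} for all i ∈ ℚ, and that φ(b(i/p)) − α·b(i) = a(i) for all i ∈ ℚ. Then for every i ∈ ℚ and every integer k ≥ 0 one has ∑_{m=−k}^{∞} α^{−(m+1)}·φ^m(a(i·p^{−m})) = −α^k·φ^{−k}(b(i·p^k)) (the series converging in S), and for every i < 0 this quantity tends to 0 as k → ∞; consequently, for every rational i < 0 the two-sided sum ∑_{m∈ℤ} α^{−(m+1)}·φ^m(a(i·p^{−m})) vanishes, in the sense that lim_{k→∞}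 ∑_{m=−k}^{∞} α^{−(m+1)}·φ^m(a(i·p^{−m})) = 0. -/
open Filter

/-!
Put `c m = α^{-m} φ^m (b (i p^{-m}))` for `m : ℤ`. Applying `α^{-(m+1)} φ^m` to the equation at
`i p^{-m}` shows that the `m`-th term of the series is `c (m + 1) - c m`
(`frobenius_term_eq_sub`), so the series telescopes. For `m → ∞` the argument `i p^{-m}` stays
bounded, hence so do `a` and `b` there, and `‖α⁻¹‖ < 1` gives both absolute convergence and
`c m → 0`; the sum over `m ≥ -k` is therefore `-c (-k)`. For `i < 0`,
`‖c (-k)‖ ≤ ‖α‖^k D q^{p^k}` with `q = p^{r i} < 1`, and the doubly exponential decay beats `‖α‖^k`.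
-/

theorem ringAut_zpow_norm {S : Type*} [NormedCommRing S] (φ : S ≃+* S)
    (hφ : ∀ x : S, ‖φ x‖ = ‖x‖) (m : ℤ) (x : S) : ‖(φ ^ m) x‖ = ‖x‖ := by
  induction m generalizing x with
  | zero => simp
  | succ n ih => rw [zpow_add_one, RingAut.mul_apply, ih, hφ]
  | pred n ih =>
    rw [zpow_sub_one, RingAut.mul_apply, ih, ← hφ (φ⁻¹ x), show φ (φ⁻¹ x) = x from φ.apply_symm_apply x]

theorem ringAut_zpow_fixed {S : Type*} [CommRing S] (φ : S ≃+* S) (x : S)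
    (hx : φ x = x) (m : ℤ) : (φ ^ m) x = x := by
  induction m with
  | zero => simp
  | succ n ih => rw [zpow_add_one, RingAut.mul_apply, hx, ih]
  | pred n ih =>
    have h : φ⁻¹ x = x := φ.injective (by rw [show φ (φ⁻¹ x) = x from φ.apply_symm_apply x, hx])
    rw [zpow_sub_one, RingAut.mul_apply, h, ih]

/-- The terms of the series are consecutive differences of `m ↦ α^{-m} φ^m (b (i p^{-m}))`. -/
theorem frobenius_term_eq_sub {S : Type*} [CommRing S] (p : ℕ) (hp : p ≠ 0) (φ : S ≃+* S)
    (α : Sˣ) (hα : φ (α : S) = (α : S)) (a b : ℚ → S)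
    (heq : ∀ i : ℚ, φ (b (i / (p : ℚ))) - (α : S) * b i = a i) (i : ℚ) (m : ℤ) :
    ((α ^ (-(m + 1)) : Sˣ) : S) * (φ ^ m) (a (i * (p : ℚ) ^ (-m))) =
      ((α ^ (-(m + 1)) : Sˣ) : S) * (φ ^ (m + 1)) (b (i * (p : ℚ) ^ (-(m + 1)))) -
      ((α ^ (-m) : Sˣ) : S) * (φ ^ m) (b (i * (p : ℚ) ^ (-m))) := by
  have hp' : (p : ℚ) ≠ 0 := by exact_mod_cast hp
  have h1 : i * (p : ℚ) ^ (-m) / p = i * (p : ℚ) ^ (-(m + 1)) := by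
    rw [neg_add, ← sub_eq_add_neg, zpow_sub_one₀ hp', div_eq_mul_inv, mul_assoc]
  have h2 : ((α ^ (-m) : Sˣ) : S) = ((α ^ (-(m + 1)) : Sˣ) : S) * (α : S) := by
    rw [← Units.val_mul, ← zpow_add_one]
    congr 2
    ring
  rw [← heq, h1, map_sub, map_mul, ringAut_zpow_fixed φ _ hα, h2, zpow_add_one φ,
    RingAut.mul_apply]
  ring

/-- For `0 ≤ q < 1` and `p ≥ 2`, the doubly exponential decay of `q ^ (p ^ k)` beats `A ^ k`. -/
theorem tendsto_pow_mul_pow_pow (p : ℕ) (hp : 2 ≤ p) (A q : ℝ) (hA : 0 ≤ A) (hq0 : 0 ≤ q)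
    (hq1 : q < 1) : Tendsto (fun k : ℕ => A ^ k * q ^ (p ^ k)) atTop (nhds 0) := by
  have hp' : (1 : ℝ) < p := by exact_mod_cast hp
  -- With `A ≤ p ^ s` and `n = p ^ k`, the quantity is at most `n ^ s * q ^ n`.
  obtain ⟨s, hs⟩ := pow_unbounded_of_one_lt A hp'
  have h1 := (tendsto_pow_const_mul_const_pow_of_abs_lt_one s
    (by rwa [abs_of_nonneg hq0] : |q| < 1)).comp
    (tendsto_pow_atTop_atTop_of_one_lt (r := p) hp)
  refine squeeze_zero (fun k => by positivity) (fun k => ?_) h1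
  simp only [Function.comp]
  have : A ^ k ≤ ((p ^ k : ℕ) : ℝ) ^ s := by
    push_cast
    rw [← pow_mul, mul_comm, pow_mul]
    gcongr
  gcongr

/-- necessity of the vanishing criterion in the key lemma on the Frobenius
equation: let `p` be a prime, `S` a complete commutative normed ring, `φ : S ≃+* S` an
isometric ring automorphism, and `α ∈ Sˣ` with `φ α = α` and `‖α⁻¹‖ < 1`.  Let `a b : ℚ → S`
satisfy `‖a i‖ ≤ D * p^(r*i)`, `‖b i‖ ≤ D * p^(r*i)` (some `r > 0`, `D ≥ 0`) and
`φ (b (i/p)) - α * b i = a i` for all `i ∈ ℚ`.  Then for every `i ∈ ℚ` and every `k ∈ ℕ`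
the series `∑_{m=-k}^∞ α^{-(m+1)} φ^m (a (i p^{-m}))` (indexed by `j ∈ ℕ` via `m = j - k`)
converges with sum `-α^k φ^{-k} (b (i p^k))`; for `i < 0` this quantity tends to `0` as
`k → ∞`, and consequently the two-sided sum vanishes in the sense that the partial tail sums
tend to `0`. -/
theorem frobenius_equation_vanishing_criterion (p : ℕ) (hp : p.Prime)
    (S : Type*) [NormedCommRing S] [CompleteSpace S]
    (φ : S ≃+* S) (hφ : ∀ x : S, ‖φ x‖ = ‖x‖)
    (α : Sˣ) (hα : φ (α : S) = (α : S)) (hα1 : ‖((α⁻¹ : Sˣ) : S)‖ < 1)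
    (a b : ℚ → S)
    (r : ℝ) (hr : 0 < r) (D : ℝ) (hD : 0 ≤ D)
    (ha : ∀ i : ℚ, ‖a i‖ ≤ D * (p : ℝ) ^ (r * (i : ℝ)))
    (hb : ∀ i : ℚ, ‖b i‖ ≤ D * (p : ℝ) ^ (r * (i : ℝ)))
    (heq : ∀ i : ℚ, φ (b (i / (p : ℚ))) - (α : S) * b i = a i) :
    (∀ (i : ℚ) (k : ℕ),
      HasSum
        (fun j : ℕ => ((α ^ (-(((j : ℤ) - (k : ℤ)) + 1)) : Sˣ) : S) *
          (φ ^ ((j : ℤ) - (k : ℤ))) (a (i * (p : ℚ) ^ (-((j : ℤ) - (k : ℤ))))))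
        (-(((α ^ (k : ℤ) : Sˣ) : S) * (φ ^ (-(k : ℤ))) (b (i * (p : ℚ) ^ (k : ℤ)))))) ∧
    (∀ i : ℚ, i < 0 →
      Tendsto
        (fun k : ℕ => ((α ^ (k : ℤ) : Sˣ) : S) * (φ ^ (-(k : ℤ))) (b (i * (p : ℚ) ^ (k : ℤ))))
        atTop (nhds 0)) ∧
    (∀ i : ℚ, i < 0 →
      Tendsto
        (fun k : ℕ => ∑' j : ℕ, ((α ^ (-(((j : ℤ) - (k : ℤ)) + 1)) : Sˣ) : S) *
          (φ ^ ((j : ℤ) - (k : ℤ))) (a (i * (p : ℚ) ^ (-((j : ℤ) - (k : ℤ))))))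
        atTop (nhds 0)) := by
  have hp1 : (1 : ℝ) < p := by exact_mod_cast hp.one_lt
  have hp0 : (0 : ℝ) < p := by positivity
  have hnorm := ringAut_zpow_norm φ hφ
  have hterm := frobenius_term_eq_sub p hp.ne_zero φ α hα a b heq
  have hsum : ∀ (i : ℚ) (k : ℕ),
      HasSum
        (fun j : ℕ => ((α ^ (-(((j : ℤ) - (k : ℤ)) + 1)) : Sˣ) : S) *
          (φ ^ ((j : ℤ) - (k : ℤ))) (a (i * (p : ℚ) ^ (-((j : ℤ) - (k : ℤ))))))
        (-(((α ^ (k : ℤ) : Sˣ) : S) * (φ ^ (-(k : ℤ))) (b (i * (p : ℚ) ^ (k : ℤ))))) := by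
    intro i k
    -- For `m = j - k ≥ -k` the argument `i p^{-m}` is at most `|i| p^k`.
    obtain ⟨M, hM⟩ : ∃ M : ℝ, ∀ f : ℚ → S, (∀ i : ℚ, ‖f i‖ ≤ D * (p : ℝ) ^ (r * (i : ℝ))) →
        ∀ j : ℕ, ‖f (i * (p : ℚ) ^ (-((j : ℤ) - (k : ℤ))))‖ ≤ M := by
      refine ⟨D * (p : ℝ) ^ (r * (|(i : ℝ)| * (p : ℝ) ^ (k : ℤ))), fun f hf j => (hf _).trans ?_⟩
      push_cast
      have h3 : (p : ℝ) ^ (-((j : ℤ) - (k : ℤ))) ≤ (p : ℝ) ^ (k : ℤ) :=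
        zpow_le_zpow_right₀ hp1.le (by lia)
      gcongr
      · exact hp1.le
      · exact le_abs_self _
    have hpow : ∀ (j : ℕ) (n : ℤ), ((α ^ (n - j) : Sˣ) : S) =
        ((α⁻¹ : Sˣ) : S) ^ j * ((α ^ n : Sˣ) : S) := by
      intro j n
      rw [← Units.val_pow_eq_pow_val, ← Units.val_mul, inv_pow, sub_eq_neg_add, zpow_add,
        zpow_neg, zpow_natCast]
    have hsummable : Summable (fun j : ℕ => ((α ^ (-(((j : ℤ) - (k : ℤ)) + 1)) : Sˣ) : S) *
          (φ ^ ((j : ℤ) - (k : ℤ))) (a (i * (p : ℚ) ^ (-((j : ℤ) - (k : ℤ)))))) := by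
      refine Summable.of_norm_bounded
        (g := fun j : ℕ => ‖((α⁻¹ : Sˣ) : S) ^ j‖ * (‖((α ^ ((k : ℤ) - 1) : Sˣ) : S)‖ * M))
        ((summable_norm_geometric_of_norm_lt_one hα1).mul_right _) fun j => ?_
      have e : -(((j : ℤ) - (k : ℤ)) + 1) = ((k : ℤ) - 1) - j := by ring
      rw [e, hpow, mul_assoc]
      refine (norm_mul_le _ _).trans ?_
      gcongr
      refine (norm_mul_le _ _).trans ?_
      gcongr
      rw [hnorm]
      exact hM a ha j
    rw [hsummable.hasSum_iff_tendsto_nat]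
    let c : ℕ → S := fun j => ((α ^ (-((j : ℤ) - (k : ℤ))) : Sˣ) : S) *
      (φ ^ ((j : ℤ) - (k : ℤ))) (b (i * (p : ℚ) ^ (-((j : ℤ) - (k : ℤ)))))
    have hc : Tendsto c atTop (nhds 0) := by
      refine squeeze_zero_norm (a := fun j : ℕ =>
        ‖((α⁻¹ : Sˣ) : S) ^ j‖ * (‖((α ^ (k : ℤ) : Sˣ) : S)‖ * M)) (fun j => ?_) ?_
      · simp only [c]
        have e : -((j : ℤ) - (k : ℤ)) = (k : ℤ) - j := by ring
        nth_rewrite 1 [e]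
        rw [hpow, mul_assoc]
        refine (norm_mul_le _ _).trans ?_
        gcongr
        refine (norm_mul_le _ _).trans ?_
        gcongr
        rw [hnorm]
        exact hM b hb j
      · simpa using (summable_norm_geometric_of_norm_lt_one hα1).tendsto_atTop_zero.mul_const
          (‖((α ^ (k : ℤ) : Sˣ) : S)‖ * M)
    have hc0 : c 0 = ((α ^ (k : ℤ) : Sˣ) : S) * (φ ^ (-(k : ℤ))) (b (i * (p : ℚ) ^ (k : ℤ))) := by
      simp [c]
    have hpart : ∀ n : ℕ, ∑ j ∈ Finset.range n, ((α ^ (-(((j : ℤ) - (k : ℤ)) + 1)) : Sˣ) : S) *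
          (φ ^ ((j : ℤ) - (k : ℤ))) (a (i * (p : ℚ) ^ (-((j : ℤ) - (k : ℤ))))) = c n - c 0 := by
      intro n
      rw [← Finset.sum_range_sub]
      refine Finset.sum_congr rfl fun j _ => ?_
      have e : ((j + 1 : ℕ) : ℤ) - (k : ℤ) = (j : ℤ) - k + 1 := by push_cast; ring
      simp only [c]
      rw [hterm, e]
    simp_rw [hpart]
    rw [← hc0]
    simpa using hc.sub_const (c 0)
  have hlim : ∀ i : ℚ, i < 0 →
      Tendsto
        (fun k : ℕ => ((α ^ (k : ℤ) : Sˣ) : S) * (φ ^ (-(k : ℤ))) (b (i * (p : ℚ) ^ (k : ℤ))))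
        atTop (nhds 0) := by
    intro i hi
    have hi' : (i : ℝ) < 0 := by exact_mod_cast hi
    have hq1 : (p : ℝ) ^ (r * (i : ℝ)) < 1 :=
      Real.rpow_lt_one_of_one_lt_of_neg hp1 (mul_neg_of_pos_of_neg hr hi')
    have h := (tendsto_pow_mul_pow_pow p hp.two_le ‖(α : S)‖ _ (norm_nonneg _)
      (by positivity) hq1).mul_const D
    rw [zero_mul] at h
    refine squeeze_zero_norm' ?_ h
    -- `k = 0` is excluded because `‖1‖ ≤ 1` need not hold in `S`.
    filter_upwards [eventually_gt_atTop 0] with k hk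
    refine (norm_mul_le _ _).trans ?_
    rw [hnorm, mul_assoc, zpow_natCast, Units.val_pow_eq_pow_val]
    refine mul_le_mul (norm_pow_le' _ hk) ((hb _).trans_eq ?_) (norm_nonneg _) (by positivity)
    rw [mul_comm, ← Real.rpow_natCast, ← Real.rpow_mul hp0.le]
    push_cast
    rw [zpow_natCast, mul_assoc]
  refine ⟨hsum, hlim, fun i hi => ?_⟩
  simp_rw [fun k => (hsum i k).tsum_eq]
  simpa using (hlim i hi).neg
end

section
/- Let S be a complete commutative normed ring, let φ : S → S be an isometric ring homomorphism, and let α be a unit of S with φ(α) = α and ‖α⁻¹‖ < 1. Then for every bounded sequence d : ℕ → S there is a unique bounded sequence c : ℕ → S satisfying φ(c(m+1)) − α·c(m) = d(m) for all m ∈ ℕ, and it is given by the convergent series c(m) = −∑_{k=0}^∞ α^{−(k+1)}·φ^k(d(m+k)). -/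
/-!
Write `β = α⁻¹` and rewrite the recursion as `c m = β * φ (c (m + 1)) - β * d m`. Since `φ` fixes
`β`, iterating it `n` times gives
`∑_{k < n} β ^ (k + 1) * φ^k (d (m + k)) = β ^ n * φ^n (c (m + n)) - c m`
(`sum_range_recursion`). For bounded `c` the first term on the right tends to `0`, because `φ` is
isometric and `‖β‖ < 1`; hence every bounded solution is the negative of the sum of the series,
which gives uniqueness. Conversely the series converges absolutely by comparison with a geometric
series (`norm_term_le`), with a bound independent of `m`, and applying the continuous map `φ` to it
shifts it by one index, so it solves the recursion.
-/

theorem norm_iterate_of_isometric {S : Type*} [NormedCommRing S] {φ : S →+* S}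
    (hφ : ∀ x : S, ‖φ x‖ = ‖x‖) (k : ℕ) (x : S) : ‖(⇑φ)^[k] x‖ = ‖x‖ := by
  induction k with
  | zero => rfl
  | succ k ih => rw [Function.iterate_succ_apply', hφ, ih]

theorem map_inv_of_map_eq {S : Type*} [CommRing S] {φ : S →+* S} {α : Sˣ}
    (hα : φ (α : S) = (α : S)) : φ ((α⁻¹ : Sˣ) : S) = ((α⁻¹ : Sˣ) : S) := by
  have h : (α : S) * φ ((α⁻¹ : Sˣ) : S) = 1 := by
    nth_rewrite 1 [← hα]
    rw [← map_mul, Units.mul_inv, map_one]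
  exact Units.eq_inv_of_mul_eq_one_right (by rwa [mul_comm] at h)

theorem iterate_map_unit_mul {S : Type*} [CommRing S] {φ : S →+* S} {α : Sˣ}
    (hα : φ (α : S) = (α : S)) (k : ℕ) (x : S) :
    (⇑φ)^[k] ((α : S) * x) = (α : S) * (⇑φ)^[k] x := by
  induction k with
  | zero => rfl
  | succ k ih => rw [Function.iterate_succ_apply', ih, map_mul, hα, Function.iterate_succ_apply']

/-- The exponent `k + 1` is positive, so no assumption `‖1‖ = 1` is needed. -/
theorem norm_term_le {S : Type*} [NormedCommRing S] {φ : S →+* S}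
    (hφ : ∀ x : S, ‖φ x‖ = ‖x‖) (α : Sˣ) {C : ℝ} {x : S} (hx : ‖x‖ ≤ C) (k : ℕ) :
    ‖((α⁻¹ ^ (k + 1) : Sˣ) : S) * (⇑φ)^[k] x‖ ≤ ‖((α⁻¹ : Sˣ) : S)‖ ^ (k + 1) * C := by
  refine (norm_mul_le _ _).trans ?_
  rw [norm_iterate_of_isometric hφ, Units.val_pow_eq_pow_val]
  gcongr
  exact norm_pow_le' _ k.succ_pos

/-- The recursion iterated `n` times: the partial sums of the series telescope. -/
theorem sum_range_recursion {S : Type*} [CommRing S] {φ : S →+* S} {α : Sˣ}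
    (hα : φ (α : S) = (α : S)) {c d : ℕ → S}
    (h : ∀ m : ℕ, φ (c (m + 1)) - (α : S) * c m = d m) (m n : ℕ) :
    ∑ k ∈ Finset.range n, ((α⁻¹ ^ (k + 1) : Sˣ) : S) * (⇑φ)^[k] (d (m + k)) =
      ((α⁻¹ ^ n : Sˣ) : S) * (⇑φ)^[n] (c (m + n)) - c m := by
  induction n with
  | zero => simp
  | succ n ih =>
    have e : (⇑φ)^[n] (d (m + n)) =
        (⇑φ)^[n + 1] (c (m + (n + 1))) - (α : S) * (⇑φ)^[n] (c (m + n)) := by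
      rw [← h, iterate_map_sub, iterate_map_unit_mul hα, Function.iterate_succ_apply, add_assoc]
    rw [Finset.sum_range_succ, ih, e, pow_succ, Units.val_mul]
    linear_combination (-(((α⁻¹ ^ n : Sˣ) : S) * (⇑φ)^[n] (c (m + n)))) * α.inv_mul


/-- the recursion underlying the solution of the Frobenius equation: let `S`
be a complete commutative normed ring, `φ : S → S` an isometric ring homomorphism, and `α ∈ Sˣ`
with `φ α = α` and `‖α⁻¹‖ < 1`.  Then for every bounded sequence `d : ℕ → S` there is a unique
bounded sequence `c : ℕ → S` with `φ (c (m+1)) - α * c m = d m` for all `m`, and it is given by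
the convergent series `c m = -∑_{k=0}^∞ α^{-(k+1)} φ^k (d (m+k))`. -/
theorem frobenius_recursion (S : Type*) [NormedCommRing S] [CompleteSpace S]
    (φ : S →+* S) (hφ : ∀ x : S, ‖φ x‖ = ‖x‖)
    (α : Sˣ) (hα : φ (α : S) = (α : S)) (hα1 : ‖((α⁻¹ : Sˣ) : S)‖ < 1)
    (d : ℕ → S) (hd : ∃ C : ℝ, ∀ m : ℕ, ‖d m‖ ≤ C) :
    (∃! c : ℕ → S,
      (∃ C : ℝ, ∀ m : ℕ, ‖c m‖ ≤ C) ∧ ∀ m : ℕ, φ (c (m + 1)) - (α : S) * c m = d m) ∧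
    (∀ c : ℕ → S,
      ((∃ C : ℝ, ∀ m : ℕ, ‖c m‖ ≤ C) ∧ ∀ m : ℕ, φ (c (m + 1)) - (α : S) * c m = d m) →
      ∀ m : ℕ,
        HasSum (fun k : ℕ => ((α⁻¹ ^ (k + 1) : Sˣ) : S) * (⇑φ)^[k] (d (m + k))) (-(c m))) := by
  obtain ⟨C, hC⟩ := hd
  have hgeom : Summable fun k : ℕ => ‖((α⁻¹ : Sˣ) : S)‖ ^ (k + 1) :=
    (summable_nat_add_iff 1).2 (summable_geometric_of_lt_one (norm_nonneg _) hα1)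
  have hle (m k : ℕ) := norm_term_le hφ α (hC (m + k)) k
  have hsum (m : ℕ) :
      Summable fun k : ℕ => ((α⁻¹ ^ (k + 1) : Sˣ) : S) * (⇑φ)^[k] (d (m + k)) :=
    Summable.of_norm_bounded (hgeom.mul_right C) (hle m)
  have key (c : ℕ → S)
      (hc : (∃ C : ℝ, ∀ m : ℕ, ‖c m‖ ≤ C) ∧ ∀ m : ℕ, φ (c (m + 1)) - (α : S) * c m = d m)
      (m : ℕ) :
      HasSum (fun k : ℕ => ((α⁻¹ ^ (k + 1) : Sˣ) : S) * (⇑φ)^[k] (d (m + k))) (-(c m)) := by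
    obtain ⟨⟨B, hB⟩, hrec⟩ := hc
    refine (hsum m).hasSum_iff_tendsto_nat.2 ?_
    simp only [sum_range_recursion hα hrec]
    -- The index is shifted to make the exponent positive, since `‖1‖ ≤ 1` may fail in `S`.
    rw [← Filter.tendsto_add_atTop_iff_nat 1, ← zero_sub (c m)]
    refine Filter.Tendsto.sub_const ?_ _
    refine squeeze_zero_norm (fun n => ?_)
      (by simpa using hgeom.tendsto_atTop_zero.mul_const B)
    rw [Function.iterate_succ_apply]
    exact norm_term_le hφ α ((hφ _).trans_le (hB _)) n
  refine ⟨?_, key⟩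
  refine ⟨fun m => -∑' k : ℕ, ((α⁻¹ ^ (k + 1) : Sˣ) : S) * (⇑φ)^[k] (d (m + k)), ⟨
    ⟨∑' k : ℕ, ‖((α⁻¹ : Sˣ) : S)‖ ^ (k + 1) * C, fun m => ?_⟩,
    fun m => ?_⟩, fun c hc => ?_⟩
  · rw [norm_neg]
    exact tsum_of_norm_bounded (hgeom.mul_right C).hasSum (hle m)
  · have hcont : Continuous φ := (AddMonoidHomClass.isometry_of_norm φ hφ).continuous
    -- Applying `φ` to the series at `m + 1` gives `α` times the tail of the series at `m`.
    have hshift (k : ℕ) :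
        φ (((α⁻¹ ^ (k + 1) : Sˣ) : S) * (⇑φ)^[k] (d (m + 1 + k))) =
          (α : S) * (((α⁻¹ ^ (k + 1 + 1) : Sˣ) : S) * (⇑φ)^[k + 1] (d (m + (k + 1)))) := by
      rw [map_mul, ← Function.iterate_succ_apply' (⇑φ), ← mul_assoc, ← Units.val_mul,
        pow_succ' _ (k + 1), mul_inv_cancel_left, Units.val_pow_eq_pow_val, map_pow,
        map_inv_of_map_eq hα, add_assoc m 1 k, add_comm 1 k]
    have h1 := (hsum (m + 1)).map_tsum φ hcont
    simp only [hshift] at h1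
    rw [((summable_nat_add_iff 1).2 (hsum m)).tsum_mul_left] at h1
    have h0 := (hsum m).tsum_eq_zero_add
    simp only [zero_add, pow_one, add_zero, Function.iterate_zero, id_eq] at h0
    simp only [map_neg]
    rw [h1, h0]
    linear_combination d m * α.mul_inv
  · funext m
    rw [(key c hc m).tsum_eq, neg_neg]
end

section
/- Let A be a commutative ring, M an A-module, Θ an A-linear endomorphism of M, and Q ∈ A[X] a polynomial such that Q(Θ) ∘ Θ = 0 as endomorphisms of M. Write a₀ = Q(0) for the constant coefficient of Q. Then: (i) for every m ∈ M one has a₀·m ∈ ker Θ + ker Q(Θ); and (ii) a₀·x = 0 for every x ∈ ker Θ ∩ ker Q(Θ). Equivalently, both the kernel and the cokernel of the addition map ker Θ ⊕ ker Q(Θ) → M, (x, y) ↦ x + y, are annihilated by Q(0). -/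
/-!
Writing `Q = R * X + a₀` gives `a₀ = Q(Θ) - Θ * R(Θ)` in the commutative subalgebra `A[Θ]` of
`End_A(M)`. Since `Q(Θ) * Θ = 0`, the image of `Q(Θ)` lies in `ker Θ` and the image of `Θ` lies in
`ker Q(Θ)`, so the identity decomposes `a₀ • m`; on `ker Θ ⊓ ker Q(Θ)` its right-hand side
vanishes.
-/

/-- the algebraic core of Proposition `Gamma-base-change`: let `A` be a
commutative ring, `M` an `A`-module, `Θ` an `A`-linear endomorphism of `M`, and `Q ∈ A[X]` with
`Q(Θ) ∘ Θ = 0`.  Write `a₀ = Q(0)` for the constant coefficient of `Q`.  Then (i) for every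
`m ∈ M`, `a₀ • m ∈ ker Θ + ker Q(Θ)`, and (ii) `a₀ • x = 0` for every
`x ∈ ker Θ ∩ ker Q(Θ)`; i.e. the kernel and cokernel of the addition map
`ker Θ ⊕ ker Q(Θ) → M` are annihilated by `Q(0)`. -/
theorem kernel_decomposition_up_to_Q0 (A : Type*) [CommRing A]
    (M : Type*) [AddCommGroup M] [Module A M]
    (Θ : Module.End A M) (Q : Polynomial A)
    (hQ : Polynomial.aeval Θ Q * Θ = 0) :
    (∀ m : M, Q.coeff 0 • m ∈ LinearMap.ker Θ ⊔ LinearMap.ker (Polynomial.aeval Θ Q)) ∧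
    (∀ x ∈ LinearMap.ker Θ ⊓ LinearMap.ker (Polynomial.aeval Θ Q),
      Q.coeff 0 • x = 0) := by
  -- `Q = divX Q * X + C a₀`, evaluated at `Θ`
  have key : Polynomial.aeval Θ Q =
      Polynomial.aeval Θ Q.divX * Θ + algebraMap A (Module.End A M) (Q.coeff 0) := by
    conv_lhs => rw [← Polynomial.divX_mul_X_add Q]
    simp
  have hcomm (P : Polynomial A) : Polynomial.aeval Θ P * Θ = Θ * Polynomial.aeval Θ P := by
    simpa using congrArg (Polynomial.aeval Θ) (mul_comm P Polynomial.X)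
  have hm (m : M) : Polynomial.aeval Θ Q m =
      Polynomial.aeval Θ Q.divX (Θ m) + Q.coeff 0 • m := by
    simpa using LinearMap.congr_fun key m
  refine ⟨fun m => ?_, fun x hx => ?_⟩
  · -- `a₀ m = Q(Θ) m - Θ (R(Θ) m)` with `R = divX Q`: `Θ` kills the first term and `Q(Θ)` the second
    refine Submodule.mem_sup.2 ⟨Polynomial.aeval Θ Q m, ?_,
      -(Θ (Polynomial.aeval Θ Q.divX m)), ?_, ?_⟩
    · rw [LinearMap.mem_ker, ← Module.End.mul_apply, ← hcomm, hQ, LinearMap.zero_apply]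
    · rw [LinearMap.mem_ker, map_neg, ← Module.End.mul_apply, hQ, LinearMap.zero_apply, neg_zero]
    · rw [hm, ← Module.End.mul_apply, ← Module.End.mul_apply, hcomm]
      abel
  · obtain ⟨h1, h2⟩ := Submodule.mem_inf.1 hx
    rw [LinearMap.mem_ker] at h1 h2
    simpa [h1, h2] using (hm x).symm
end

section
/- Let p be a prime number and let A be a unital normed algebra over ℚ_p which is complete, whose norm is ultrametric (satisfies the strong triangle inequality) and submultiplicative with ‖1‖ = 1. Let a ∈ A with ‖a − 1‖ < 1/p. Then the series u = ∑_{m=0}^∞ (1/(m+1))·(1 − a)^m converges in A, it satisfies ‖u − 1‖ < 1, u is invertible in A, and (a − 1)·u = log a, where log a denotes the convergent series −∑_{m=1}^∞ (1/m)·(1 − a)^m. -/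
/-!
Put `x = 1 - a` and `r = p * ‖x‖ < 1`. Since `p ^ v ∣ m + 1` forces
`p ^ v ≤ m + 1 ≤ 2 ^ m ≤ p ^ m`, the coefficient `1 / (m + 1)` has `p`-adic absolute value at most
`p ^ m` (`norm_inv_succ_le`), so the `m`-th term of the series for `u` has norm at most `r ^ m`.
The series therefore converges by comparison with a geometric series. The terms with `m ≥ 1` all
have norm at most `r`, so the ultrametric inequality gives `‖u - 1‖ ≤ r < 1`, and `u` is invertible
by the Neumann series. Multiplying the series termwise by `a - 1 = -x` gives the logarithm.
-/

theorem norm_inv_succ_le (p : ℕ) [hp : Fact p.Prime] (m : ℕ) :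
    ‖((m : ℚ_[p]) + 1)⁻¹‖ ≤ (p : ℝ) ^ m := by
  have h0 : ((m + 1 : ℕ) : ℚ_[p]) ≠ 0 := Nat.cast_ne_zero.2 m.succ_ne_zero
  have h1 : p ^ padicValNat p (m + 1) ≤ p ^ m := calc
    p ^ padicValNat p (m + 1) ≤ m + 1 := Nat.le_of_dvd m.succ_pos pow_padicValNat_dvd
    _ ≤ 2 ^ m := Nat.lt_two_pow_self
    _ ≤ p ^ m := Nat.pow_le_pow_left hp.out.two_le m
  rw [← Nat.cast_succ, norm_inv, Padic.norm_eq_zpow_neg_valuation h0, Padic.valuation_natCast,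
    zpow_neg, inv_inv, zpow_natCast]
  exact_mod_cast h1


/-- invertibility of `u = ∑ (1-a)^m/(m+1)` in the proof of Proposition
`Theta-gamma`: let `p` be a prime and `A` a complete normed `ℚ_p`-algebra whose norm is
ultrametric and submultiplicative with `‖1‖ = 1`.  Let `a ∈ A` with `‖a - 1‖ < 1/p`.  Then the
series `u = ∑_{m=0}^∞ (1/(m+1)) • (1-a)^m` converges in `A`, it satisfies `‖u - 1‖ < 1`, `u`
is invertible in `A`, and `(a - 1) * u = log a`, where `log a` is the sum of the convergent
series `-∑_{m=1}^∞ (1/m) • (1-a)^m`. -/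
theorem inverse_log_ratio (p : ℕ) [Fact p.Prime]
    (A : Type*) [NormedRing A] [NormOneClass A] [NormedAlgebra ℚ_[p] A]
    [CompleteSpace A] [IsUltrametricDist A]
    (a : A) (ha : ‖a - 1‖ < 1 / p) :
    ∃ u l : A,
      HasSum (fun m : ℕ => (((m : ℚ_[p]) + 1)⁻¹) • (1 - a) ^ m) u ∧
      HasSum (fun m : ℕ => -((((m : ℚ_[p]) + 1)⁻¹) • (1 - a) ^ (m + 1))) l ∧
      ‖u - 1‖ < 1 ∧ IsUnit u ∧ (a - 1) * u = l := by
  have hp0 : (0 : ℝ) < p := Nat.cast_pos.2 (Fact.out : p.Prime).pos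
  set x : A := 1 - a with hx
  set r : ℝ := p * ‖x‖ with hr
  have hr0 : 0 ≤ r := by positivity
  have hr1 : r < 1 := by
    rw [← norm_sub_rev, lt_div_iff₀ hp0, mul_comm] at ha
    exact ha
  set f : ℕ → A := fun m => (((m : ℚ_[p]) + 1)⁻¹) • x ^ m with hf
  have hbound (m : ℕ) : ‖f m‖ ≤ r ^ m := by
    rw [hf, hr, mul_pow]
    exact (norm_smul_le _ _).trans
      (mul_le_mul (norm_inv_succ_le p m) (norm_pow_le x m) (norm_nonneg _) (by positivity))
  have hsum : Summable f :=
    Summable.of_norm_bounded (summable_geometric_of_lt_one hr0 hr1) hbound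
  have hu : ‖∑' m, f m - 1‖ < 1 := by
    have htail : ∑' m, f m - 1 = ∑' m, f (m + 1) := by
      rw [hsum.tsum_eq_zero_add]
      simp [hf]
    rw [htail]
    refine (IsUltrametricDist.norm_tsum_le_of_forall_le (C := r) fun m => ?_).trans_lt hr1
    exact (hbound _).trans (pow_le_of_le_one hr0 hr1.le m.succ_ne_zero)
  refine ⟨∑' m, f m, (a - 1) * ∑' m, f m, hsum.hasSum, ?_, hu, ?_, rfl⟩
  · have hterm : (fun m : ℕ => -((((m : ℚ_[p]) + 1)⁻¹) • x ^ (m + 1))) =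
        fun m => (a - 1) * f m := by
      funext m
      rw [← neg_sub 1 a, ← hx, hf, neg_mul, mul_smul_comm, pow_succ']
    rw [hterm]
    exact hsum.hasSum.mul_left (a - 1)
  · rw [← norm_sub_rev] at hu
    simpa using isUnit_one_sub_of_norm_lt_one hu
end
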